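/- For every integer n > 1, both LWO(ℤ_{≥0}ⁿ) and LO(ℤ_{≥0}ⁿ) are homeomorphic to the Cantor set (equivalently, to the Cantor space ℕ → Bool). -/

import Mathlib

/-!
A zero-dimensional compact space with a countable separating family of clopen sets and no isolated
points is homeomorphic to `ℕ → Bool` (Brouwer, `homeomorph_cantor`). Everything reduces to this:

* `LO(ℤ_{≥0}ⁿ)` is compact, because the pointwise limit of left orders along an ultrafilter is a
  left order, and the countably many sets `U_{a,b}` are clopen and separate points.
* `LWO(ℤ_{≥0}ⁿ)` is the clopen subset `⋂ i, U_{0, eᵢ}`: by Dickson's lemma a left order is a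
  well-order as soon as all basis vectors are positive (`mem_LWOSet_iff`).
* No order `r` is isolated (`not_isOpen_singleton_order`). A basic neighbourhood of `r` is given by
  finitely many inequalities `a < b`. The differences `b - a` lie in the positive semigroup of `r`
  in `ℤⁿ`, which does not contain `0`, so Gordan's alternative (`gordan`, by Fourier–Motzkin
  elimination) yields a rational linear form that is positive on all of them. Ordering first by
  this form and breaking ties by the reverse of `r` gives a left order in the neighbourhood. It
  differs from `r`, since for `n > 1` a rational linear form takes equal values at two distinct
  points of `ℤ_{≥0}ⁿ`, and these are compared oppositely.
-/

/-- A left order on an additive semigroup: a strict linear (total) order `r`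
such that `r a b` implies `r (c + a) (c + b)` for all `c`. -/
def IsLeftAddOrder {G : Type*} [Add G] (r : G → G → Prop) : Prop :=
  IsStrictTotalOrder G r ∧ ∀ a b c : G, r a b → r (c + a) (c + b)

/-- The set `LO(G)` of left orders on `G`. -/
def LeftAddOrder (G : Type*) [Add G] : Type _ :=
  {r : G → G → Prop // IsLeftAddOrder r}

/-- `U_{a,b}` is the set of left orders `<` with `a < b`. -/
def UU {G : Type*} [Add G] (a b : G) : Set (LeftAddOrder G) := {r | r.1 a b}

/-- `LO(G)` carries the smallest topology in which every `U_{a,b}` is open. -/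
instance {G : Type*} [Add G] : TopologicalSpace (LeftAddOrder G) :=
  TopologicalSpace.generateFrom {s | ∃ a b : G, s = UU a b}

/-- `LWO(ℤ_{≥0}ⁿ)`: the set of left orders on `ℤ_{≥0}ⁿ = (Fin n → ℕ)` that are
well-orders (every nonempty subset has a least element), with the subspace
topology. -/
def LWOSet (n : ℕ) : Set (LeftAddOrder (Fin n → ℕ)) :=
  {r | ∀ s : Set (Fin n → ℕ), s.Nonempty → ∃ m ∈ s, ∀ x ∈ s, m = x ∨ r.1 m x}

/-! ### Brouwer's characterization of the Cantor space -/

section Brouwer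

variable {X : Type*}

/-- The piece of `D` on the side `b` of `C`. -/
def side (D C : Set X) (b : Bool) : Set X := if b then D ∩ C else D \ C

/-- The cell of level `k` along the branch `σ`, where `C k D` is the set used to cut a cell `D` of
level `k` in two. -/
def cell (C : ℕ → Set X → Set X) (σ : ℕ → Bool) : ℕ → Set X
  | 0 => Set.univ
  | k + 1 => side (cell C σ k) (C k (cell C σ k)) (σ k)

open Classical in
/-- The cell of level `k` containing the point `x`. -/
noncomputable def cellAt (C : ℕ → Set X → Set X) (x : X) : ℕ → Set X
  | 0 => Set.univ
  | k + 1 => side (cellAt C x k) (C k (cellAt C x k)) (decide (x ∈ C k (cellAt C x k)))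

open Classical in
/-- The branch followed by the point `x`. -/
noncomputable def branch (C : ℕ → Set X → Set X) (x : X) (k : ℕ) : Bool :=
  decide (x ∈ C k (cellAt C x k))

theorem cellAt_eq_cell (C : ℕ → Set X → Set X) (x : X) (k : ℕ) :
    cellAt C x k = cell C (branch C x) k := by
  induction k with
  | zero => rfl
  | succ k ih => simp only [cellAt, cell, branch, ← ih]

theorem mem_cellAt (C : ℕ → Set X → Set X) (x : X) (k : ℕ) : x ∈ cellAt C x k := by
  induction k with
  | zero => trivial
  | succ k ih =>
    by_cases h : x ∈ C k (cellAt C x k) <;> simp [cellAt, side, h, ih]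

/-- A point lying in all cells along `σ` has branch `σ`. -/
theorem cellAt_eq_of_mem (C : ℕ → Set X → Set X) (x : X) (σ : ℕ → Bool)
    (hx : ∀ k, x ∈ cell C σ k) (k : ℕ) : cellAt C x k = cell C σ k ∧ branch C x k = σ k := by
  have key : ∀ k, cellAt C x k = cell C σ k → branch C x k = σ k := by
    intro k hk
    have h := hx (k + 1)
    cases hs : σ k <;> simp_all [cell, side, branch]
  induction k with
  | zero => exact ⟨rfl, key 0 rfl⟩
  | succ k ih =>
    have h : cellAt C x (k + 1) = cell C σ (k + 1) := by
      rw [cell, ← ih.1, ← ih.2]; rfl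
    exact ⟨h, key _ h⟩

variable [TopologicalSpace X]

theorem isClopen_side {D C : Set X} (hD : IsClopen D) (hC : IsClopen C) (b : Bool) :
    IsClopen (side D C b) := by
  cases b
  · simpa [side] using hD.diff hC
  · simpa [side] using hD.inter hC

/-- Brouwer's theorem. Cells of level `k` are cut by `B k` whenever `B k` does cut them, and by an
arbitrary clopen set otherwise; sending a point to its branch is then a homeomorphism. -/
theorem homeomorph_cantor [CompactSpace X] [Nonempty X] (B : ℕ → Set X)
    (hB : ∀ k, IsClopen (B k)) (sep : ∀ x y, x ≠ y → ∃ k, x ∈ B k ∧ y ∉ B k)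
    (perf : ∀ x : X, ¬ IsOpen {x}) : Nonempty (X ≃ₜ (ℕ → Bool)) := by
  have exC : ∀ (k : ℕ) (D : Set X), ∃ C : Set X, IsClopen D → D.Nonempty →
      IsClopen C ∧ (D ∩ C).Nonempty ∧ (D \ C).Nonempty ∧
        ((D ∩ B k).Nonempty → (D \ B k).Nonempty → C = B k) := by
    intro k D
    by_cases h : (D ∩ B k).Nonempty ∧ (D \ B k).Nonempty
    · exact ⟨B k, fun _ _ => ⟨hB k, h.1, h.2, fun _ _ => rfl⟩⟩
    by_cases hD : IsClopen D ∧ D.Nonempty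
    · obtain ⟨hc, x, hx⟩ := hD
      have : ∃ y ∈ D, x ≠ y := by
        by_contra! hcon
        refine perf x ?_
        have : ({x} : Set X) = D := by
          ext y
          exact ⟨fun hy => by rw [Set.mem_singleton_iff.1 hy]; exact hx, fun hy => (hcon y hy).symm⟩
        rw [this]
        exact hc.isOpen
      obtain ⟨y, hy, hxy⟩ := this
      obtain ⟨j, hj, hj'⟩ := sep x y hxy
      exact ⟨B j, fun _ _ => ⟨hB j, ⟨x, hx, hj⟩, ⟨y, hy, hj'⟩, fun h1 h2 => absurd ⟨h1, h2⟩ h⟩⟩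
    · exact ⟨∅, fun h1 h2 => absurd ⟨h1, h2⟩ hD⟩
  choose C hC using exC
  have cellP : ∀ σ k, IsClopen (cell C σ k) ∧ (cell C σ k).Nonempty := by
    intro σ k
    induction k with
    | zero => exact ⟨isClopen_univ, Set.univ_nonempty⟩
    | succ k ih =>
      obtain ⟨h1, h2, h3, -⟩ := hC k _ ih.1 ih.2
      refine ⟨isClopen_side ih.1 h1 _, ?_⟩
      cases hs : σ k
      · simpa [cell, side, hs] using h3
      · simpa [cell, side, hs] using h2
  have cellAtP : ∀ x k, IsClopen (cellAt C x k) ∧ (cellAt C x k).Nonempty := by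
    intro x k
    rw [cellAt_eq_cell]
    exact cellP _ _
  have inj : Function.Injective (branch C) := by
    intro x y hxy
    by_contra hne
    obtain ⟨k, hk, hk'⟩ := sep x y hne
    have he : cellAt C x k = cellAt C y k := by rw [cellAt_eq_cell, cellAt_eq_cell, hxy]
    obtain ⟨-, -, -, h⟩ := hC k _ (cellAtP x k).1 (cellAtP x k).2
    have hCB := h ⟨x, mem_cellAt C x k, hk⟩ ⟨y, he ▸ mem_cellAt C y k, hk'⟩
    have hb := congrFun hxy k
    rw [branch, branch, ← he, hCB, decide_eq_decide] at hb
    exact hk' (hb.1 hk)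
  have surj : Function.Surjective (branch C) := by
    intro σ
    obtain ⟨x, hx⟩ := IsCompact.nonempty_iInter_of_sequence_nonempty_isCompact_isClosed (cell C σ)
      (fun i => by
        rw [cell, side]
        split_ifs
        · exact Set.inter_subset_left
        · exact Set.sdiff_subset)
      (fun i => (cellP σ i).2) (cellP σ 0).1.isClosed.isCompact (fun i => (cellP σ i).1.isClosed)
    exact ⟨x, funext fun k => (cellAt_eq_of_mem C x σ (Set.mem_iInter.1 hx) k).2⟩
  -- Cells of a given level are pairwise disjoint, so all points of a cell determine that cell.
  have loc : ∀ x y k, y ∈ cellAt C x k → cellAt C y k = cellAt C x k := by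
    intro x y k
    induction k with
    | zero => intro _; rfl
    | succ k ih =>
      intro hy
      by_cases hx : x ∈ C k (cellAt C x k)
      · simp only [cellAt, side, hx, decide_true, if_true] at hy ⊢
        simp [ih hy.1, hy.2]
      · simp only [cellAt, side, hx, decide_false] at hy ⊢
        have hy1 := ih hy.1
        have hy2 := hy.2
        simp [hy1, hy2]
  have cont : Continuous (branch C) := by
    refine continuous_pi fun k => ?_
    rw [continuous_discrete_rng]
    intro b
    rw [isOpen_iff_mem_nhds]
    intro x hx
    filter_upwards [(cellAtP x (k + 1)).1.isOpen.mem_nhds (mem_cellAt C x (k + 1))] with y hy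
    have h1 : y ∈ side (cellAt C x k) (C k (cellAt C x k)) (branch C x k) := hy
    rw [Set.mem_preimage, Set.mem_singleton_iff] at hx ⊢
    rw [hx] at h1
    cases b
    · have h2 : y ∈ cellAt C x k \ C k (cellAt C x k) := by simpa [side] using h1
      simp [branch, loc x y k h2.1, h2.2]
    · have h2 : y ∈ cellAt C x k ∩ C k (cellAt C x k) := by simpa [side] using h1
      simp [branch, loc x y k h2.1, h2.2]
  exact ⟨Continuous.homeoOfEquivCompactToT2 (f := Equiv.ofBijective _ ⟨inj, surj⟩) cont⟩

end Brouwer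

/-! ### Gordan's alternative -/

/-- If a finite set `F` lies in a subsemigroup of `ℤⁿ` that omits `0`, then some rational linear
form is positive on `F`. The induction on `n` eliminates the first coordinate: the elements of `F`
with vanishing first coordinate, together with the combinations cancelling the first coordinate of
a pair of opposite signs, give a finite subset of `ℤⁿ⁻¹`. -/
theorem gordan (n : ℕ) : ∀ (P : Set (Fin n → ℤ)), (∀ x ∈ P, ∀ y ∈ P, x + y ∈ P) → 0 ∉ P →
    ∀ F : Finset (Fin n → ℤ), (∀ f ∈ F, f ∈ P) →
      ∃ w : Fin n → ℚ, ∀ f ∈ F, 0 < ∑ i, w i * (f i : ℚ) := by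
  induction n with
  | zero =>
    intro P _ h0 F hF
    refine ⟨0, fun f hf => ?_⟩
    exact absurd (Subsingleton.elim f 0 ▸ hF f hf) h0
  | succ n ih =>
    intro P hadd h0 F hF
    have hsmul : ∀ c : ℤ, 0 < c → ∀ x ∈ P, c • x ∈ P := by
      intro c hc x hx
      induction c, (show (1 : ℤ) ≤ c from hc) using Int.leInduction with
      | base => simpa using hx
      | succ m hm ihm =>
        rw [add_smul, one_smul]
        exact hadd _ (ihm (by omega)) _ hx
    classical
    let comb : (Fin (n + 1) → ℤ) → (Fin (n + 1) → ℤ) → (Fin (n + 1) → ℤ) :=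
      fun f g => f 0 • g + (-g 0) • f
    obtain ⟨w, hw⟩ := ih {v | (Fin.cons 0 v : Fin (n + 1) → ℤ) ∈ P}
      (fun x hx y hy => by
        have := hadd _ hx _ hy
        have e : (Fin.cons 0 x + Fin.cons 0 y : Fin (n + 1) → ℤ) = Fin.cons 0 (x + y) := by
          ext i
          refine Fin.cases ?_ (fun j => ?_) i <;> simp
        rwa [e] at this)
      (fun h => h0 (by
        have e : (Fin.cons 0 0 : Fin (n + 1) → ℤ) = 0 := by
          ext i
          refine Fin.cases ?_ (fun j => ?_) i <;> simp
        have h' : (Fin.cons 0 0 : Fin (n + 1) → ℤ) ∈ P := h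
        rwa [e] at h'))
      ((F.filter (fun f => f 0 = 0)).image Fin.tail ∪
        Finset.image₂ (fun f g => Fin.tail (comb f g))
          (F.filter (fun f => 0 < f 0)) (F.filter (fun f => f 0 < 0)))
      (by
        have tailP : ∀ u : Fin (n + 1) → ℤ, u 0 = 0 → u ∈ P →
            (Fin.cons 0 (Fin.tail u) : Fin (n + 1) → ℤ) ∈ P := by
          intro u hu hP
          rw [← hu, Fin.cons_self_tail]
          exact hP
        intro v hv
        rcases Finset.mem_union.1 hv with hv | hv
        · obtain ⟨u, hu, rfl⟩ := Finset.mem_image.1 hv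
          rw [Finset.mem_filter] at hu
          exact tailP u hu.2 (hF u hu.1)
        · obtain ⟨f, hf, g, hg, rfl⟩ := Finset.mem_image₂.1 hv
          rw [Finset.mem_filter] at hf hg
          refine tailP _ ?_ (hadd _ (hsmul _ hf.2 _ (hF g hg.1)) _
            (hsmul _ (by omega) _ (hF f hf.1)))
          simp only [comb, Pi.add_apply, Pi.smul_apply, smul_eq_mul]
          ring)
    let L : (Fin (n + 1) → ℤ) → ℚ := fun f => ∑ i : Fin n, w i * (f i.succ : ℚ)
    -- The coefficient `t` of the first coordinate must exceed `-L f / f 0` when `0 < f 0` and be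
    -- less than `-L g / g 0` when `g 0 < 0`.
    obtain ⟨t, ht1, ht2⟩ := Order.exists_between_finsets
      ((F.filter (fun f => 0 < f 0)).image (fun f => -L f / (f 0 : ℚ)))
      ((F.filter (fun f => f 0 < 0)).image (fun f => -L f / (f 0 : ℚ)))
      (by
        intro x hx y hy
        obtain ⟨f, hf, rfl⟩ := Finset.mem_image.1 hx
        obtain ⟨g, hg, rfl⟩ := Finset.mem_image.1 hy
        have h := hw (Fin.tail (comb f g))
          (Finset.mem_union_right _ (Finset.mem_image₂_of_mem hf hg))
        rw [Finset.mem_filter] at hf hg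
        have e : ∑ i, w i * ((Fin.tail (comb f g) i : ℤ) : ℚ) = f 0 * L g - g 0 * L f := by
          simp only [L, Finset.mul_sum, ← Finset.sum_sub_distrib]
          refine Finset.sum_congr rfl fun i _ => ?_
          simp only [comb, Fin.tail, Pi.add_apply, Pi.smul_apply, smul_eq_mul]
          push_cast
          ring
        rw [e] at h
        have hf0 : (0 : ℚ) < f 0 := by exact_mod_cast hf.2
        have hg0 : (g 0 : ℚ) < 0 := by exact_mod_cast hg.2
        rw [div_lt_iff₀ hf0, div_mul_eq_mul_div, lt_div_iff_of_neg hg0]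
        nlinarith)
    refine ⟨Fin.cons t w, fun f hf => ?_⟩
    rw [Fin.sum_univ_succ]
    simp only [Fin.cons_zero, Fin.cons_succ]
    change 0 < t * (f 0 : ℚ) + L f
    rcases lt_trichotomy (f 0) 0 with h | h | h
    · have h1 := ht2 _ (Finset.mem_image_of_mem _ (Finset.mem_filter.2 ⟨hf, h⟩))
      have h' : (f 0 : ℚ) < 0 := by exact_mod_cast h
      rw [lt_div_iff_of_neg h'] at h1
      linarith
    · have h1 := hw (Fin.tail f) (Finset.mem_union_left _
        (Finset.mem_image_of_mem _ (Finset.mem_filter.2 ⟨hf, h⟩)))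
      rw [h, Int.cast_zero, mul_zero, zero_add]
      exact h1
    · have h1 := ht1 _ (Finset.mem_image_of_mem _ (Finset.mem_filter.2 ⟨hf, h⟩))
      have h' : (0 : ℚ) < f 0 := by exact_mod_cast h
      rw [div_lt_iff₀ h'] at h1
      linarith

/-! ### The topology of the space of left orders -/

section LO

variable {G : Type*} [Add G]

/-- A relation satisfying the axioms of left orders, as an element of `LO(G)`. -/
def LeftAddOrder.ofRel (r : G → G → Prop) (h : IsLeftAddOrder r) : LeftAddOrder G := ⟨r, h⟩

theorem LeftAddOrder.irrefl (r : LeftAddOrder G) (a : G) : ¬ r.1 a a :=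
  r.2.1.toIsStrictOrder.toIrrefl.irrefl a

theorem LeftAddOrder.trans (r : LeftAddOrder G) {a b c : G} (h : r.1 a b) (h' : r.1 b c) :
    r.1 a c := r.2.1.toIsStrictOrder.toIsTrans.trans a b c h h'

theorem LeftAddOrder.total (r : LeftAddOrder G) {a b : G} (h : a ≠ b) : r.1 a b ∨ r.1 b a := by
  by_contra! hc
  exact h (r.2.1.toTrichotomous.trichotomous a b hc.1 hc.2)

theorem LeftAddOrder.asymm (r : LeftAddOrder G) {a b : G} (h : r.1 a b) : ¬ r.1 b a :=
  fun h' => r.irrefl a (r.trans h h')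

theorem isLeftAddOrder_mk {r : G → G → Prop} (h1 : ∀ a, ¬ r a a)
    (h2 : ∀ a b c, r a b → r b c → r a c) (h3 : ∀ a b, a ≠ b → r a b ∨ r b a)
    (h4 : ∀ a b c : G, r a b → r (c + a) (c + b)) : IsLeftAddOrder r :=
  ⟨{ trichotomous := fun a b hab hba => by
      by_contra hne
      exact (h3 a b hne).elim hab hba
     irrefl := h1
     trans := h2 }, h4⟩

theorem isOpen_UU (a b : G) : IsOpen (UU a b) :=
  TopologicalSpace.isOpen_generateFrom_of_mem ⟨a, b, rfl⟩

theorem isClopen_UU (a b : G) : IsClopen (UU a b) := by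
  refine ⟨⟨?_⟩, isOpen_UU a b⟩
  by_cases h : a = b
  · subst h
    have : (UU a a)ᶜ = Set.univ := Set.eq_univ_of_forall fun r => r.irrefl a
    rw [this]
    exact isOpen_univ
  · have : (UU a b)ᶜ = UU b a := by
      ext r
      exact ⟨fun hr => (r.total h).resolve_left hr, fun hr => r.asymm hr⟩
    rw [this]
    exact isOpen_UU b a

theorem exists_UU_of_ne {r r' : LeftAddOrder G} (h : r ≠ r') :
    ∃ a b, r ∈ UU a b ∧ r' ∉ UU a b := by
  by_contra! hc
  refine h (Subtype.ext (funext fun a => funext fun b => propext ⟨hc a b, fun h' => ?_⟩))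
  by_contra hn
  have hne : a ≠ b := by
    rintro rfl
    exact r'.irrefl a h'
  exact r'.asymm h' (hc b a ((r.total hne).resolve_left hn))

/-- An ultrafilter on `LO(G)` converges to its pointwise limit, the order in which `a < b` when
`U_{a,b}` belongs to the ultrafilter. -/
instance : CompactSpace (LeftAddOrder G) := by
  refine ⟨isCompact_iff_ultrafilter_le_nhds.2 fun F _ => ?_⟩
  have hl : IsLeftAddOrder (fun a b : G => UU a b ∈ F) := by
    refine isLeftAddOrder_mk (fun a ha => ?_) (fun a b c h1 h2 => ?_) (fun a b hab => ?_)
      (fun a b c h => ?_)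
    · obtain ⟨r, hr⟩ := F.nonempty_of_mem ha
      exact r.irrefl a hr
    · filter_upwards [h1, h2] with r hr1 hr2 using r.trans hr1 hr2
    · rw [← Ultrafilter.union_mem_iff]
      filter_upwards with r using r.total hab
    · filter_upwards [h] with r hr using r.2.2 a b c hr
  refine ⟨.ofRel _ hl, trivial, ?_⟩
  rw [TopologicalSpace.nhds_generateFrom]
  refine le_iInf₂ ?_
  rintro _ ⟨hs, a, b, rfl⟩
  exact Filter.le_principal_iff.2 hs

end LO

/-! ### Left orders on the free commutative monoid -/

section FreeMonoid

variable {n : ℕ}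

/-- The value at `a` of the linear form with coefficients `w`. -/
def form (w : Fin n → ℚ) (a : Fin n → ℕ) : ℚ := ∑ i, w i * (a i : ℚ)

theorem form_add (w : Fin n → ℚ) (a b : Fin n → ℕ) : form w (a + b) = form w a + form w b := by
  simp [form, mul_add, Finset.sum_add_distrib]

theorem form_single (w : Fin n → ℚ) (i : Fin n) (m : ℕ) : form w (Pi.single i m) = w i * m := by
  rw [form, Finset.sum_eq_single i]
  · simp
  · intro j _ hj
    simp [Pi.single_eq_of_ne hj]
  · simp

/-- For `n > 1`, a rational linear form does not separate the points of `ℤ_{≥0}ⁿ`. -/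
theorem exists_form_eq (hn : 1 < n) (w : Fin n → ℚ) : ∃ a b, a ≠ b ∧ form w a = form w b := by
  set i : Fin n := ⟨0, by omega⟩
  set j : Fin n := ⟨1, hn⟩
  have hij : i ≠ j := by simp [i, j]
  -- `p • eᵢ - q • eⱼ` is a nonzero integer vector in the kernel of the form.
  obtain ⟨p, q, hpq, h⟩ : ∃ p q : ℤ, (p ≠ 0 ∨ q ≠ 0) ∧ w i * p = w j * q := by
    by_cases hj : w j = 0
    · exact ⟨0, 1, Or.inr one_ne_zero, by simp [hj]⟩
    · refine ⟨(w j).num * (w i).den, (w i).num * (w j).den, Or.inl ?_, ?_⟩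
      · exact mul_ne_zero (Rat.num_ne_zero.2 hj) (by exact_mod_cast (w i).den_ne_zero)
      · have h1 := Rat.mul_den_eq_num (w i)
        have h2 := Rat.mul_den_eq_num (w j)
        push_cast
        rw [← h1, ← h2]
        ring
  refine ⟨Pi.single i p.toNat + Pi.single j (-q).toNat,
    Pi.single i (-p).toNat + Pi.single j q.toNat, fun he => ?_, ?_⟩
  · have h1 := congrFun he i
    have h2 := congrFun he j
    simp [Pi.single_eq_of_ne hij, Pi.single_eq_of_ne hij.symm] at h1 h2
    omega
  · simp only [form_add, form_single]
    have hp : ((p.toNat : ℤ) : ℚ) - ((-p).toNat : ℤ) = p := by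
      rw [← Int.cast_sub]; congr 1; omega
    have hq : ((q.toNat : ℤ) : ℚ) - ((-q).toNat : ℤ) = q := by
      rw [← Int.cast_sub]; congr 1; omega
    rw [Int.cast_natCast, Int.cast_natCast] at hp hq
    rw [← hp, ← hq] at h
    linarith

/-- Compare first by the linear form `w`, then by `r`. -/
theorem isLeftAddOrder_refine (w : Fin n → ℚ) (r : LeftAddOrder (Fin n → ℕ)) :
    IsLeftAddOrder (fun a b => form w a < form w b ∨ form w a = form w b ∧ r.1 a b) := by
  refine isLeftAddOrder_mk ?_ ?_ ?_ ?_
  · rintro a (h | h)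
    · exact lt_irrefl _ h
    · exact r.irrefl a h.2
  · rintro a b c (h | h) (h' | h')
    · exact Or.inl (h.trans h')
    · exact Or.inl (h'.1 ▸ h)
    · exact Or.inl (h.1 ▸ h')
    · exact Or.inr ⟨h.1.trans h'.1, r.trans h.2 h'.2⟩
  · intro a b hab
    rcases lt_trichotomy (form w a) (form w b) with h | h | h
    · exact Or.inl (Or.inl h)
    · exact (r.total hab).imp (fun h' => Or.inr ⟨h, h'⟩) (fun h' => Or.inr ⟨h.symm, h'⟩)
    · exact Or.inr (Or.inl h)
  · rintro a b c (h | h)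
    · left
      rw [form_add, form_add]
      linarith
    · right
      rw [form_add, form_add, h.1]
      exact ⟨rfl, r.2.2 a b c h.2⟩

theorem isLeftAddOrder_swap {G : Type*} [Add G] (r : LeftAddOrder G) :
    IsLeftAddOrder (fun a b => r.1 b a) :=
  isLeftAddOrder_mk r.irrefl (fun _ _ _ h h' => r.trans h' h) (fun _ _ h => (r.total h).symm)
    (fun a b c h => r.2.2 b a c h)

/-- A finite set of inequalities valid in `r` is implied by the positivity of a linear form. -/
theorem exists_form_lt (r : LeftAddOrder (Fin n → ℕ)) (S : Finset ((Fin n → ℕ) × (Fin n → ℕ)))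
    (hS : ∀ p ∈ S, r.1 p.1 p.2) : ∃ w : Fin n → ℚ, ∀ p ∈ S, form w p.1 < form w p.2 := by
  classical
  obtain ⟨w, hw⟩ := gordan n
    {z | ∃ a b, r.1 a b ∧ z = fun i => (b i : ℤ) - (a i : ℤ)}
    (by
      rintro _ ⟨a, b, h, rfl⟩ _ ⟨c, d, h', rfl⟩
      refine ⟨c + a, b + d, ?_, ?_⟩
      · refine r.trans (r.2.2 _ _ c h) ?_
        rw [add_comm c b]
        exact r.2.2 _ _ b h'
      · ext i
        simp only [Pi.add_apply]
        push_cast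
        ring)
    (by
      rintro ⟨a, b, h, h0⟩
      have : a = b := by
        ext i
        have := congrFun h0 i
        simp only [Pi.zero_apply] at this
        omega
      exact r.irrefl a (this ▸ h))
    (S.image fun p => fun i => (p.2 i : ℤ) - (p.1 i : ℤ))
    (by
      intro f hf
      obtain ⟨p, hp, rfl⟩ := Finset.mem_image.1 hf
      exact ⟨p.1, p.2, hS p hp, rfl⟩)
  refine ⟨w, fun p hp => ?_⟩
  have h := hw _ (Finset.mem_image_of_mem _ hp)
  have e : ∑ i, w i * (((p.2 i : ℤ) - (p.1 i : ℤ) : ℤ) : ℚ) = form w p.2 - form w p.1 := by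
    simp only [form, ← Finset.sum_sub_distrib]
    refine Finset.sum_congr rfl fun i _ => ?_
    push_cast
    ring
  rw [e] at h
  linarith

/-- No left order is isolated: near `r` lies an order that compares by a suitable linear form and
breaks ties by the reverse of `r`. -/
theorem not_isOpen_singleton_order (hn : 1 < n) (r : LeftAddOrder (Fin n → ℕ)) : ¬ IsOpen {r} := by
  classical
  intro ho
  obtain ⟨_, ⟨T, ⟨hTf, hTs⟩, rfl⟩, hrT, hT⟩ :=
    (TopologicalSpace.isTopologicalBasis_of_subbasis (α := LeftAddOrder (Fin n → ℕ))
      rfl).exists_subset_of_mem_open (Set.mem_singleton r) ho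
  have hTs' : ∀ s, ∃ a b : Fin n → ℕ, s ∈ T → s = UU a b := by
    intro s
    by_cases hs : s ∈ T
    · obtain ⟨a, b, h⟩ := hTs hs
      exact ⟨a, b, fun _ => h⟩
    · exact ⟨0, 0, fun h => absurd h hs⟩
  choose a b hab using hTs'
  obtain ⟨w, hw⟩ := exists_form_lt r (hTf.toFinset.image fun s => (a s, b s)) (by
    intro p hp
    obtain ⟨s, hs, rfl⟩ := Finset.mem_image.1 hp
    have hs' := hTf.mem_toFinset.1 hs
    have h := hrT s hs'
    rw [hab s hs'] at h
    exact h)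
  have main : LeftAddOrder.ofRel _
      (isLeftAddOrder_refine w (.ofRel _ (isLeftAddOrder_swap r))) = r := by
    refine Set.mem_singleton_iff.1 (hT ?_)
    rw [Set.mem_sInter]
    intro s hs
    have hp : form w (a s) < form w (b s) :=
      hw (a s, b s) (Finset.mem_image_of_mem _ (hTf.mem_toFinset.2 hs))
    rw [hab s hs]
    exact Or.inl hp
  obtain ⟨x, y, hxy, he⟩ := exists_form_eq hn w
  have h2 : (form w x < form w y ∨ form w x = form w y ∧ r.1 y x) ↔ r.1 x y :=
    iff_of_eq (congrFun (congrFun (congrArg Subtype.val main) x) y)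
  rcases r.total hxy with h | h
  · rcases h2.2 h with h' | h'
    · exact h'.ne he
    · exact r.asymm h h'.2
  · exact r.asymm h (h2.1 (Or.inr ⟨he, h⟩))

/-- By Dickson's lemma, a left order is a well-order if and only if the basis vectors are
positive. -/
theorem mem_LWOSet_iff (r : LeftAddOrder (Fin n → ℕ)) :
    r ∈ LWOSet n ↔ ∀ i, r.1 0 (Pi.single i 1) := by
  constructor
  · intro h i
    have hne : (0 : Fin n → ℕ) ≠ Pi.single i 1 := by
      intro h0
      have := congrFun h0 i
      simp at this
    by_contra hc
    have hlt := (r.total hne).resolve_left hc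
    -- The multiples of a negative basis vector form a strictly decreasing sequence.
    obtain ⟨m, ⟨k, rfl⟩, hm⟩ := h (Set.range fun k : ℕ => k • (Pi.single i 1 : Fin n → ℕ))
      (Set.range_nonempty _)
    have h1 := r.2.2 _ _ (k • (Pi.single i 1 : Fin n → ℕ)) hlt
    rw [add_zero, ← succ_nsmul] at h1
    rcases hm _ ⟨k + 1, rfl⟩ with h2 | h2
    · simp only at h2
      rw [← h2] at h1
      exact r.irrefl _ h1
    · exact r.asymm h1 h2
  · intro h
    have hpos : ∀ x : Fin n → ℕ, 0 = x ∨ r.1 0 x := by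
      intro x
      induction x using Pi.single_induction with
      | zero => exact Or.inl rfl
      | add f g hf hg =>
        rcases hf with rfl | hf
        · rwa [zero_add]
        · rcases hg with rfl | hg
          · rw [add_zero]; exact Or.inr hf
          · have := r.2.2 _ _ f hg
            rw [add_zero] at this
            exact Or.inr (r.trans hf this)
      | single i m =>
        induction m with
        | zero => exact Or.inl (Pi.single_zero i).symm
        | succ m ih =>
          right
          have h1 := r.2.2 _ _ (Pi.single i m) (h i)
          rw [add_zero, ← Pi.single_add] at h1
          rcases ih with ih | ih
          · rwa [← ih] at h1
          · exact r.trans ih h1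
    have hle : ∀ x y : Fin n → ℕ, x ≤ y → x = y ∨ r.1 x y := by
      intro x y hxy
      obtain ⟨z, rfl⟩ := exists_add_of_le hxy
      rcases hpos z with rfl | hz
      · exact Or.inl (add_zero x).symm
      · have := r.2.2 _ _ x hz
        rw [add_zero] at this
        exact Or.inr this
    have hwf : WellFounded r.1 := by
      have := r.2.1.toIsStrictOrder
      rw [RelEmbedding.wellFounded_iff_isEmpty]
      refine ⟨fun f => ?_⟩
      obtain ⟨k, m, hkm, hf⟩ := wellQuasiOrdered_le (fun k => f k)
      have h1 : r.1 (f m) (f k) := f.map_rel_iff.2 hkm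
      rcases hle _ _ hf with h2 | h2
      · rw [h2] at h1
        exact r.irrefl _ h1
      · exact r.asymm h1 h2
    intro s hs
    obtain ⟨m, hm, hmin⟩ := hwf.has_min s hs
    refine ⟨m, hm, fun x hx => ?_⟩
    by_cases hmx : m = x
    · exact Or.inl hmx
    · exact Or.inr ((r.total hmx).resolve_right (hmin x hx))

theorem isClopen_LWOSet : IsClopen (LWOSet n) := by
  have : LWOSet n = ⋂ i : Fin n, UU 0 (Pi.single i 1) := by
    ext r
    rw [mem_LWOSet_iff, Set.mem_iInter]
    rfl
  rw [this]
  exact isClopen_iInter_of_finite fun i => isClopen_UU _ _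

/-- The lexicographic order is a left well-order. -/
theorem LWOSet_nonempty : (LWOSet n).Nonempty := by
  refine ⟨.ofRel (fun a b => toLex a < toLex b) (isLeftAddOrder_mk (fun a => lt_irrefl _)
    (fun a b c h h' => lt_trans h h') (fun a b h => lt_or_gt_of_ne fun h' => h (toLex_inj.1 h'))
    (fun a b c h => ?_)), ?_⟩
  · rw [toLex_add, toLex_add]
    gcongr
  · rw [mem_LWOSet_iff]
    intro i
    refine Pi.toLex_strictMono ?_
    exact Pi.single_pos.2 one_pos

/-- Brouwer's theorem applied to a clopen set of orders. -/
theorem homeomorph_of_isClopen (hn : 1 < n) (W : Set (LeftAddOrder (Fin n → ℕ)))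
    (hW : IsClopen W) (hne : W.Nonempty) : Nonempty (W ≃ₜ (ℕ → Bool)) := by
  have : CompactSpace W := isCompact_iff_compactSpace.1 hW.isClosed.isCompact
  have : Nonempty W := hne.to_subtype
  obtain ⟨e, he⟩ := exists_surjective_nat ((Fin n → ℕ) × (Fin n → ℕ))
  refine homeomorph_cantor (fun k => Subtype.val ⁻¹' UU (e k).1 (e k).2)
    (fun k => (isClopen_UU _ _).preimage continuous_subtype_val) (fun x y hxy => ?_)
    (fun x hx => ?_)
  · obtain ⟨a, b, h1, h2⟩ := exists_UU_of_ne (fun h => hxy (Subtype.ext h))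
    obtain ⟨k, hk⟩ := he (a, b)
    refine ⟨k, ?_⟩
    rw [hk]
    exact ⟨h1, h2⟩
  · have := hW.isOpen.isOpenMap_subtype_val _ hx
    rw [Set.image_singleton] at this
    exact not_isOpen_singleton_order hn _ this

end FreeMonoid

/-- For `n > 1`, both `LWO(ℤ_{≥0}ⁿ)` and `LO(ℤ_{≥0}ⁿ)` are homeomorphic to the
Cantor space `ℕ → Bool`. -/
theorem stmt16 (n : ℕ) (hn : 1 < n) :
    Nonempty (↥(LWOSet n) ≃ₜ (ℕ → Bool)) ∧
      Nonempty (LeftAddOrder (Fin n → ℕ) ≃ₜ (ℕ → Bool)) := by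
  refine ⟨homeomorph_of_isClopen hn _ isClopen_LWOSet LWOSet_nonempty, ?_⟩
  obtain ⟨f⟩ := homeomorph_of_isClopen hn _ isClopen_univ (LWOSet_nonempty.mono (Set.subset_univ _))
  exact ⟨(Homeomorph.Set.univ _).symm.trans f⟩
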